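/- Let Q̂ be a symmetric d×d real matrix with zero diagonal, let Ψ be a finite set of ordered triples (i,j,k) of pairwise distinct indices in {1, …, d}, and let η̌ = (η̌_{ijk})_{(i,j,k)∈Ψ} be reals with Q(η̌) ∈ 𝒬, where Q(η̌)_{ab} = Q̂_{ab} + ∑_{(i,j,k)∈Ψ} η̌_{ijk}·(1 if {a,b} = {i,j}, −1 if {a,b} = {i,k}, −1 if {a,b} = {j,k}, 0 otherwise). Write Γ̌ = Γ(Q(η̌)). Suppose the KKT conditions hold: (i) primal feasibility, Γ̌_{ij} ≤ Γ̌_{ik} + Γ̌_{jk} for all (i,j,k) ∈ Ψ; (ii) dual feasibility, η̌_{ijk} ≥ 0 for all (i,j,k) ∈ Ψ; (iii) complementary slackness, ∑_{(i,j,k)∈Ψ} η̌_{ijk}(Γ̌_{ij} − Γ̌_{ik} − Γ̌_{jk}) = 0. Then Γ̌ is the unique minimizer of the primal objective Γ ↦ ⟨Γ, Q̂⟩ − log det(CM(Γ)) over the feasible set {Γ ∈ 𝒞^d : Γ_{ij} ≤ Γ_{ik} + Γ_{jk} for all (i,j,k) ∈ Ψ}. -/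

import Mathlib

open Matrix Finset

/-- `Θ(Q)`: `Θ(Q)_{ij} = −Q_{ij}` for `i ≠ j` and `Θ(Q)_{ii} = ∑_{j≠i} Q_{ij}`. -/
noncomputable def thetaOf {d : ℕ} (Q : Matrix (Fin d) (Fin d) ℝ) :
    Matrix (Fin d) (Fin d) ℝ :=
  Matrix.of fun i j => if i = j then ∑ l ∈ univ.filter (fun l => l ≠ i), Q i l else -Q i j

/-- Membership in `𝒬`: symmetric, zero diagonal, and `xᵀΘ(Q)x > 0` for every nonzero
`x` with `∑ᵢ xᵢ = 0`. -/
def memQ {d : ℕ} (Q : Matrix (Fin d) (Fin d) ℝ) : Prop :=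
  Q.IsSymm ∧ (∀ i, Q i i = 0) ∧
    ∀ x : Fin d → ℝ, x ≠ 0 → (∑ i, x i) = 0 → 0 < x ⬝ᵥ (thetaOf Q).mulVec x

/-- The centering matrix `P = I − (1/d)𝟙𝟙ᵀ`. -/
noncomputable def Pmat (d : ℕ) : Matrix (Fin d) (Fin d) ℝ :=
  1 - ((d : ℝ)⁻¹) • Matrix.of (fun _ _ : Fin d => (1 : ℝ))

/-- `S` is the matrix `Σ(Q)`: the unique symmetric matrix with `Σ(Q)𝟙 = 0` and
`Θ(Q)Σ(Q) = P`. -/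
def isSigmaOf {d : ℕ} (Q S : Matrix (Fin d) (Fin d) ℝ) : Prop :=
  S.IsSymm ∧ S.mulVec (fun _ => 1) = 0 ∧ thetaOf Q * S = Pmat d

/-- The variogram associated with `Σ`: `Γ_{ij} = Σ_{ii} + Σ_{jj} − 2Σ_{ij}`. -/
noncomputable def gammaOf {d : ℕ} (S : Matrix (Fin d) (Fin d) ℝ) :
    Matrix (Fin d) (Fin d) ℝ :=
  Matrix.of fun i j => S i i + S j j - 2 * S i j

/-- The inner product `⟨A, B⟩ = ∑_{i<j} A_{ij} B_{ij}` on symmetric matrices with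
zero diagonal. -/
noncomputable def sinner {d : ℕ} (A B : Matrix (Fin d) (Fin d) ℝ) : ℝ :=
  ∑ p ∈ univ.filter (fun p : Fin d × Fin d => p.1 < p.2), A p.1 p.2 * B p.1 p.2

open Classical in
/-- The spanning tree polynomial `τ(Q) = ∑_T ∏_{{i,j}∈T} Q_{ij}`, summed over all
spanning trees of the complete graph on `{1, …, d}`. -/
noncomputable def tau {d : ℕ} (Q : Matrix (Fin d) (Fin d) ℝ) : ℝ :=
  ∑ T ∈ (univ : Finset (SimpleGraph (Fin d))).filter (fun T => T.IsTree),
    ∏ p ∈ univ.filter (fun p : Fin d × Fin d => p.1 < p.2 ∧ T.Adj p.1 p.2), Q p.1 p.2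

/-- The Cayley–Menger matrix of `Γ`. -/
noncomputable def CM {d : ℕ} (Γ : Matrix (Fin d) (Fin d) ℝ) :
    Matrix (Fin (d + 1)) (Fin (d + 1)) ℝ :=
  Matrix.of fun a b =>
    if ha : (a : ℕ) < d then
      (if hb : (b : ℕ) < d then -Γ ⟨a, ha⟩ ⟨b, hb⟩ / 2 else 1)
    else (if (b : ℕ) < d then -1 else 0)

/-- Membership in the cone `𝒞^d` of symmetric matrices with zero diagonal that are
strictly conditionally negative definite. -/
def memC {d : ℕ} (Γ : Matrix (Fin d) (Fin d) ℝ) : Prop :=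
  Γ.IsSymm ∧ (∀ i, Γ i i = 0) ∧
    ∀ x : Fin d → ℝ, x ≠ 0 → (∑ i, x i) = 0 → x ⬝ᵥ Γ.mulVec x < 0
/-- Coefficient of the triangle-inequality constraint `g_{ijk}` in the entry `(a,b)`:
`1` if `{a,b} = {i,j}`, `−1` if `{a,b} = {i,k}`, `−1` if `{a,b} = {j,k}`, `0` else. -/
noncomputable def triCoeff {d : ℕ} (i j k a b : Fin d) : ℝ :=
  if (a = i ∧ b = j) ∨ (a = j ∧ b = i) then 1
  else if (a = i ∧ b = k) ∨ (a = k ∧ b = i) then -1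
  else if (a = j ∧ b = k) ∨ (a = k ∧ b = j) then -1
  else 0

/-- The matrix `Q(η) = Q̂ + ∑_{(i,j,k)∈Ψ} η_{ijk} ∇_Γ g_{ijk}`. -/
noncomputable def Qeta {d : ℕ} (Qh : Matrix (Fin d) (Fin d) ℝ)
    (Ψ : Finset (Fin d × Fin d × Fin d)) (η : Fin d × Fin d × Fin d → ℝ) :
    Matrix (Fin d) (Fin d) ℝ :=
  Matrix.of fun a b => Qh a b + ∑ t ∈ Ψ, η t * triCoeff t.1 t.2.1 t.2.2 a b


section Helpers

open scoped MatrixOrder in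
lemma logdet_aux {n : Type*} [Fintype n] [DecidableEq n] {M : Matrix n n ℝ} (hM : M.PosDef) :
    Real.log M.det ≤ M.trace - Fintype.card n ∧
      (Real.log M.det = M.trace - Fintype.card n → M = 1) := by
  have hpos := hM.eigenvalues_pos
  have hdet : Real.log M.det = ∑ i, Real.log (hM.1.eigenvalues i) := by
    rw [hM.1.det_eq_prod_eigenvalues]
    simp only [RCLike.ofReal_real_eq_id, id]
    rw [Real.log_prod]
    intro i _
    exact (hpos i).ne'
  have htr : M.trace - Fintype.card n = ∑ i, (hM.1.eigenvalues i - 1) := by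
    rw [hM.1.trace_eq_sum_eigenvalues]
    simp
  rw [hdet, htr]
  have hle : ∀ i ∈ (univ : Finset n),
      Real.log (hM.1.eigenvalues i) ≤ hM.1.eigenvalues i - 1 := fun i _ =>
    Real.log_le_sub_one_of_pos (hpos i)
  refine ⟨Finset.sum_le_sum hle, fun h => ?_⟩
  have h2 := (Finset.sum_eq_sum_iff_of_le hle).1 h
  have h3 : hM.1.eigenvalues = fun _ => 1 := by
    funext i
    by_contra hne
    exact absurd (h2 i (mem_univ i)) (Real.log_lt_sub_one_of_pos (hpos i) hne).ne
  have h4 := hM.1.spectral_theorem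
  rw [h3] at h4
  have h5 : (diagonal (RCLike.ofReal ∘ fun _ : n => (1:ℝ)) : Matrix n n ℝ) = 1 := by
    ext i j; simp [Matrix.diagonal, Matrix.one_apply]
  rw [h5, map_one] at h4
  exact h4

open scoped MatrixOrder in
lemma logdet_ineq {n : Type*} [Fintype n] [DecidableEq n] {A B K : Matrix n n ℝ}
    (hA : A.PosDef) (hB : B.PosDef) (hK : K * A = 1) :
    Real.log B.det - Real.log A.det ≤ (K * B).trace - Fintype.card n ∧
      (Real.log B.det - Real.log A.det = (K * B).trace - Fintype.card n → B = A) := by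
  have hKinv : A⁻¹ = K := Matrix.inv_eq_left_inv hK
  have hKpos : K.PosDef := hKinv ▸ hA.inv
  obtain ⟨C, hC⟩ := CStarAlgebra.nonneg_iff_eq_star_mul_self.mp hKpos.posSemidef.nonneg
  rw [star_eq_conjTranspose] at hC
  have hdetM : (C * B * Cᴴ).det = K.det * B.det := by
    rw [hC]; simp only [det_mul]; ring
  have hKA : K.det * A.det = 1 := by rw [← det_mul, hK, det_one]
  have hM : (C * B * Cᴴ).PosDef := by
    rw [(hB.posSemidef.mul_mul_conjTranspose_same C).posDef_iff_det_ne_zero, hdetM]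
    exact mul_ne_zero hKpos.det_pos.ne' hB.det_pos.ne'
  have htr : (C * B * Cᴴ).trace = (K * B).trace := by
    rw [Matrix.trace_mul_comm, ← Matrix.mul_assoc, ← hC]
  have hlog : Real.log (C * B * Cᴴ).det = Real.log B.det - Real.log A.det := by
    rw [hdetM, Real.log_mul hKpos.det_pos.ne' hB.det_pos.ne']
    have : Real.log (K.det * A.det) = 0 := by rw [hKA, Real.log_one]
    rw [Real.log_mul hKpos.det_pos.ne' hA.det_pos.ne'] at this
    linarith
  have := logdet_aux hM
  rw [hlog, htr] at this
  refine ⟨this.1, fun h => ?_⟩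
  have h1 := this.2 h
  have h2 : K * B = 1 := by
    rw [hC, Matrix.mul_assoc]
    exact mul_eq_one_comm.1 h1
  have h3 : A * K = 1 := mul_eq_one_comm.1 hK
  calc B = (A * K) * B := by rw [h3, one_mul]
    _ = A := by rw [Matrix.mul_assoc, h2, mul_one]

/-- All-ones matrix. -/
def Jm (d : ℕ) : Matrix (Fin d) (Fin d) ℝ := Matrix.of fun _ _ => 1

lemma rowsum_of {d : ℕ} {S : Matrix (Fin d) (Fin d) ℝ} (h : S.mulVec (fun _ => 1) = 0) (i) :
    ∑ j, S i j = 0 := by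
  have := congrFun h i
  simpa [Matrix.mulVec, dotProduct] using this

lemma quad_gamma {d : ℕ} (S : Matrix (Fin d) (Fin d) ℝ) (x : Fin d → ℝ) (hx : ∑ i, x i = 0) :
    x ⬝ᵥ (gammaOf S).mulVec x = -2 * (x ⬝ᵥ S.mulVec x) := by
  have h1 : ∀ i, (gammaOf S).mulVec x i = (∑ j, S j j * x j) - 2 * S.mulVec x i := by
    intro i
    simp only [gammaOf, Matrix.mulVec, dotProduct, Matrix.of_apply]
    rw [Finset.mul_sum, ← Finset.sum_sub_distrib]
    have : ∑ j, (S i i + S j j - 2 * S i j) * x j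
        = S i i * ∑ j, x j + ∑ j, (S j j * x j - 2 * (S i j * x j)) := by
      rw [Finset.mul_sum, ← Finset.sum_add_distrib]
      exact Finset.sum_congr rfl fun j _ => by ring
    rw [this, hx]; ring
  simp only [dotProduct, h1]
  have : ∑ i, x i * ((∑ j, S j j * x j) - 2 * S.mulVec x i)
      = (∑ i, x i) * (∑ j, S j j * x j) + -2 * ∑ i, x i * S.mulVec x i := by
    generalize ∑ j, S j j * x j = c
    rw [Finset.mul_sum, Finset.sum_mul, ← Finset.sum_add_distrib]
    exact Finset.sum_congr rfl fun j _ => by ring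
  rw [this, hx]; ring

lemma posDef_add_J {d : ℕ} (hd : 0 < d) {S : Matrix (Fin d) (Fin d) ℝ} (hs : S.IsSymm)
    (h1 : S.mulVec (fun _ => 1) = 0)
    (hp : ∀ x : Fin d → ℝ, x ≠ 0 → (∑ i, x i) = 0 → 0 < x ⬝ᵥ S.mulVec x) :
    (S + Jm d).PosDef := by
  have hd' : (0:ℝ) < d := by exact_mod_cast hd
  refine Matrix.PosDef.of_dotProduct_mulVec_pos ?_ fun x hx => ?_
  · ext i j
    simp [Jm, hs.apply i j]
  · simp only [star_trivial]
    set m : ℝ := (∑ i, x i) / d with hm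
    set y : Fin d → ℝ := fun i => x i - m with hy
    have hxy : x = y + m • (fun _ => (1:ℝ)) := by funext i; simp [hy]
    have hysum : ∑ i, y i = 0 := by
      simp [hy, hm]; field_simp; ring
    have hSx : S.mulVec x = S.mulVec y := by
      rw [hxy, Matrix.mulVec_add, Matrix.mulVec_smul, h1]; simp
    have hJ : x ⬝ᵥ (Jm d).mulVec x = (∑ i, x i)^2 := by
      simp [Jm, Matrix.mulVec, dotProduct, ← Finset.sum_mul, sq]
    have hone : (fun _ : Fin d => (1:ℝ)) ⬝ᵥ S.mulVec y = 0 := by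
      rw [Matrix.dotProduct_mulVec, ← Matrix.mulVec_transpose, hs.eq, h1]; simp
    have hq : x ⬝ᵥ S.mulVec x = y ⬝ᵥ S.mulVec y := by
      rw [hSx]; conv_lhs => rw [hxy]
      rw [add_dotProduct, smul_dotProduct, hone]; simp
    rw [Matrix.add_mulVec, dotProduct_add, hJ, hq]
    by_cases hy0 : y = 0
    · have : ∑ i, x i ≠ 0 := by
        intro h0
        apply hx
        rw [hxy, hy0, hm, h0]; simp
      rw [hy0]
      have := sq_pos_of_ne_zero this
      simpa using this
    · have := hp y hy0 hysum
      positivity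

lemma exists_S {d : ℕ} (hd : 0 < d) {Γ : Matrix (Fin d) (Fin d) ℝ} (h : memC Γ) :
    ∃ T : Matrix (Fin d) (Fin d) ℝ, T.IsSymm ∧ T.mulVec (fun _ => 1) = 0 ∧ gammaOf T = Γ := by
  have hd' : (d:ℝ) ≠ 0 := by exact_mod_cast hd.ne'
  obtain ⟨hs, hz, -⟩ := h
  set r : Fin d → ℝ := fun i => (∑ j, Γ i j) / d with hr
  set g : ℝ := (∑ i, r i) / d with hg
  refine ⟨Matrix.of fun i j => -(Γ i j - r i - r j + g) / 2, ?_, ?_, ?_⟩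
  · ext i j
    simp only [Matrix.transpose_apply, Matrix.of_apply]
    rw [hs.apply i j]; ring
  · funext i
    simp only [Matrix.mulVec, dotProduct, Matrix.of_apply, mul_one, Pi.zero_apply]
    rw [← Finset.sum_div, Finset.sum_neg_distrib]
    simp only [Finset.sum_add_distrib, Finset.sum_sub_distrib, Finset.sum_const, card_univ,
      Fintype.card_fin, nsmul_eq_mul]
    have e1 : ∑ j, Γ i j = d * r i := by simp only [hr]; field_simp
    have e2 : ∑ j, r j = d * g := by rw [hg]; field_simp
    rw [e1, e2]; ring
  · ext i j
    simp only [gammaOf, Matrix.of_apply, hz]; ring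

lemma det_CM {d : ℕ} (hd : 0 < d) {S : Matrix (Fin d) (Fin d) ℝ}
    (h1 : S.mulVec (fun _ => 1) = 0) (hp : (S + Jm d).PosDef) :
    (CM (gammaOf S)).det = (S + Jm d).det := by
  have hd' : (d:ℝ) ≠ 0 := by exact_mod_cast hd.ne'
  let c : Matrix (Fin d) (Fin 1) ℝ := Matrix.of fun _ _ => 1
  let b : Matrix (Fin 1) (Fin d) ℝ := Matrix.of fun _ _ => -1
  let u : Matrix (Fin d) (Fin 1) ℝ := Matrix.of fun i _ => S i i / 2 + 1
  let w : Matrix (Fin 1) (Fin d) ℝ := Matrix.of fun _ j => -(S j j / 2)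
  have e1 : (CM (gammaOf S)).submatrix finSumFinEquiv finSumFinEquiv
      = fromBlocks 1 u 0 1 * fromBlocks (S + Jm d) c b 0 * fromBlocks 1 0 w 1 := by
    rw [Matrix.fromBlocks_multiply, Matrix.fromBlocks_multiply]
    ext i j
    rcases i with i | i <;> rcases j with j | j
    · simp [CM, gammaOf, c, b, u, w, Jm, Matrix.mul_apply]; ring
    · simp [CM, c, b, u, w, Matrix.mul_apply]
    · simp [CM, c, b, u, w, Matrix.mul_apply]
    · simp [CM, c, b, u, w, Matrix.mul_apply]
  have e2 : (CM (gammaOf S)).det = (fromBlocks (S + Jm d) c b (0 : Matrix (Fin 1) (Fin 1) ℝ)).det := by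
    rw [← Matrix.det_submatrix_equiv_self finSumFinEquiv, e1, det_mul, det_mul,
      det_fromBlocks_zero₂₁, det_fromBlocks_zero₁₂]
    simp
  have hu : IsUnit (S + Jm d).det := hp.det_pos.ne'.isUnit
  let _ := Matrix.invertibleOfIsUnitDet _ hu
  have hAc : (S + Jm d) * ((d:ℝ)⁻¹ • c) = c := by
    ext i j
    have := rowsum_of h1 i
    simp [c, Matrix.mul_apply, Jm]
    rw [← Finset.sum_mul, Finset.sum_add_distrib, this]
    simp [hd']
  have hinv : ⅟(S + Jm d) * c = (d:ℝ)⁻¹ • c := by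
    conv_lhs => rw [← hAc]
    rw [← Matrix.mul_assoc, invOf_mul_self, Matrix.one_mul]
  rw [e2, det_fromBlocks₁₁, Matrix.mul_assoc, hinv]
  simp [b, c, Matrix.mul_apply, hd']

lemma theta_apply {d : ℕ} {Q : Matrix (Fin d) (Fin d) ℝ} (hz : ∀ i, Q i i = 0) (i j : Fin d) :
    thetaOf Q i j = (if i = j then ∑ l, Q i l else 0) - Q i j := by
  unfold thetaOf
  simp only [Matrix.of_apply]
  split_ifs with h
  · subst h
    rw [hz, sub_zero, Finset.sum_filter]
    refine Finset.sum_congr rfl fun l _ => ?_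
    split_ifs with h
    · rfl
    · push Not at h; rw [h, hz]
  · ring

lemma theta_rowsum {d : ℕ} {Q : Matrix (Fin d) (Fin d) ℝ} (hz : ∀ i, Q i i = 0) (i : Fin d) :
    ∑ j, thetaOf Q i j = 0 := by
  simp [theta_apply hz, Finset.sum_sub_distrib]

lemma theta_symm {d : ℕ} {Q : Matrix (Fin d) (Fin d) ℝ} (hs : Q.IsSymm) (hz : ∀ i, Q i i = 0) :
    (thetaOf Q).IsSymm := by
  ext i j
  rw [Matrix.transpose_apply, theta_apply hz, theta_apply hz, hs.apply i j]
  by_cases h : i = j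
  · subst h; rfl
  · simp [h, Ne.symm h]

lemma sinner_eq {d : ℕ} {A B : Matrix (Fin d) (Fin d) ℝ} (hA : A.IsSymm) (hB : B.IsSymm)
    (hz : ∀ i, A i i = 0) : 2 * sinner A B = ∑ i, ∑ j, A i j * B i j := by
  have h1 : sinner A B = ∑ i, ∑ j, if i < j then A i j * B i j else 0 := by
    rw [sinner, Finset.sum_filter, ← Finset.univ_product_univ, Finset.sum_product]
  have h2 : sinner A B = ∑ i, ∑ j, if j < i then A i j * B i j else 0 := by
    rw [h1, Finset.sum_comm]
    refine Finset.sum_congr rfl fun i _ => Finset.sum_congr rfl fun j _ => ?_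
    rw [hA.apply i j, hB.apply i j]
  rw [two_mul]
  nth_rewrite 1 [h1]
  rw [h2, ← Finset.sum_add_distrib]
  refine Finset.sum_congr rfl fun i _ => ?_
  rw [← Finset.sum_add_distrib]
  refine Finset.sum_congr rfl fun j _ => ?_
  rcases lt_trichotomy i j with h | h | h
  · simp [h, h.not_gt]
  · subst h; simp [hz]
  · simp [h, h.not_gt]

lemma gamma_symm {d : ℕ} {S : Matrix (Fin d) (Fin d) ℝ} (hs : S.IsSymm) : (gammaOf S).IsSymm := by
  ext i j
  simp only [gammaOf, Matrix.transpose_apply, Matrix.of_apply, hs.apply i j]; ring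

lemma gamma_diag {d : ℕ} (S : Matrix (Fin d) (Fin d) ℝ) (i) : gammaOf S i i = 0 := by
  simp only [gammaOf, Matrix.of_apply]; ring

lemma trace_theta {d : ℕ} {Q S : Matrix (Fin d) (Fin d) ℝ} (hQ : Q.IsSymm) (hz : ∀ i, Q i i = 0)
    (hs : S.IsSymm) : (thetaOf Q * S).trace = sinner (gammaOf S) Q := by
  have h := sinner_eq (gamma_symm hs) hQ (gamma_diag S)
  have e1 : (thetaOf Q * S).trace = ∑ i, ∑ j, Q i j * S i i - ∑ i, ∑ j, Q i j * S i j := by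
    rw [← Finset.sum_sub_distrib]
    simp only [Matrix.trace, Matrix.diag, Matrix.mul_apply]
    refine Finset.sum_congr rfl fun i _ => ?_
    simp only [theta_apply hz, sub_mul, Finset.sum_sub_distrib, ite_mul, zero_mul,
      Finset.sum_ite_eq, mem_univ, if_true, Finset.sum_mul]
    congr 1
    exact Finset.sum_congr rfl fun j _ => by rw [hs.apply i j]
  have e2 : ∑ i, ∑ j, Q i j * S i i = ∑ i, ∑ j, Q i j * S j j := by
    rw [Finset.sum_comm]
    refine Finset.sum_congr rfl fun i _ => Finset.sum_congr rfl fun j _ => ?_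
    rw [hQ.apply i j]
  have e3 : ∑ i, ∑ j, gammaOf S i j * Q i j = ∑ i, ∑ j, Q i j * S i i
      + ∑ i, ∑ j, Q i j * S j j - 2 * ∑ i, ∑ j, Q i j * S i j := by
    simp only [Finset.mul_sum, ← Finset.sum_add_distrib, ← Finset.sum_sub_distrib]
    refine Finset.sum_congr rfl fun i _ => Finset.sum_congr rfl fun j _ => ?_
    simp only [gammaOf, Matrix.of_apply]; ring
  linarith

lemma tri_sinner {d : ℕ} {Γ : Matrix (Fin d) (Fin d) ℝ} (hs : Γ.IsSymm) (hz : ∀ i, Γ i i = 0)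
    {i j k : Fin d} (hij : i ≠ j) (hik : i ≠ k) (hjk : j ≠ k) :
    sinner Γ (Matrix.of fun a b => triCoeff i j k a b) = Γ i j - Γ i k - Γ j k := by
  have e : ∀ a b, triCoeff i j k a b =
      ((if a = i then if b = j then 1 else 0 else 0) + (if a = j then if b = i then 1 else 0 else 0))
      - ((if a = i then if b = k then 1 else 0 else 0) + (if a = k then if b = i then 1 else 0 else 0))
      - ((if a = j then if b = k then 1 else 0 else 0)
        + (if a = k then if b = j then 1 else 0 else 0)) := by
    intro a b
    unfold triCoeff
    split_ifs <;> grind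
  have hsym : (Matrix.of fun a b => triCoeff i j k a b).IsSymm := by
    ext a b
    simp only [Matrix.transpose_apply, Matrix.of_apply, triCoeff]
    split_ifs <;> grind
  have h := sinner_eq hs hsym hz
  simp only [Matrix.of_apply, e, mul_sub, mul_add, mul_ite, mul_one, mul_zero,
    Finset.sum_sub_distrib, Finset.sum_add_distrib] at h
  simp [Finset.sum_ite_irrel] at h
  have := hs.apply i j
  have := hs.apply i k
  have := hs.apply j k
  simp only [e]
  linarith

lemma sinner_Qeta {d : ℕ} (Qh : Matrix (Fin d) (Fin d) ℝ)
    (Ψ : Finset (Fin d × Fin d × Fin d))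
    (hΨ : ∀ t ∈ Ψ, t.1 ≠ t.2.1 ∧ t.1 ≠ t.2.2 ∧ t.2.1 ≠ t.2.2)
    (η : Fin d × Fin d × Fin d → ℝ) {Γ : Matrix (Fin d) (Fin d) ℝ}
    (hs : Γ.IsSymm) (hz : ∀ i, Γ i i = 0) :
    sinner Γ (Qeta Qh Ψ η) = sinner Γ Qh +
      ∑ t ∈ Ψ, η t * (Γ t.1 t.2.1 - Γ t.1 t.2.2 - Γ t.2.1 t.2.2) := by
  have h1 : ∑ t ∈ Ψ, η t * (Γ t.1 t.2.1 - Γ t.1 t.2.2 - Γ t.2.1 t.2.2)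
      = ∑ t ∈ Ψ, η t * sinner Γ (Matrix.of fun a b => triCoeff t.1 t.2.1 t.2.2 a b) := by
    refine Finset.sum_congr rfl fun t ht => ?_
    obtain ⟨h1, h2, h3⟩ := hΨ t ht
    rw [tri_sinner hs hz h1 h2 h3]
  rw [h1]
  simp only [sinner, Qeta, Matrix.of_apply, mul_add, Finset.sum_add_distrib, Finset.mul_sum]
  congr 1
  rw [Finset.sum_comm]
  exact Finset.sum_congr rfl fun t _ => Finset.sum_congr rfl fun p _ => by ring

lemma sigma_pos {d : ℕ} {Q S : Matrix (Fin d) (Fin d) ℝ} (hQ : memQ Q) (hS : isSigmaOf Q S)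
    (x : Fin d → ℝ) (hx : x ≠ 0) (hsum : ∑ i, x i = 0) : 0 < x ⬝ᵥ S.mulVec x := by
  obtain ⟨hs, h1, hP⟩ := hS
  obtain ⟨hQs, hQz, hQp⟩ := hQ
  have hPx : (thetaOf Q).mulVec (S.mulVec x) = x := by
    rw [Matrix.mulVec_mulVec, hP]
    funext i
    simp [Pmat, Matrix.sub_mulVec]
    simp [Matrix.mulVec, dotProduct, ← Finset.mul_sum, hsum]
  have hy0 : S.mulVec x ≠ 0 := by
    intro h
    rw [h, Matrix.mulVec_zero] at hPx
    exact hx hPx.symm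
  have hys : ∑ i, S.mulVec x i = 0 := by
    have : (fun _ : Fin d => (1:ℝ)) ⬝ᵥ S.mulVec x = 0 := by
      rw [Matrix.dotProduct_mulVec, ← Matrix.mulVec_transpose, hs.eq, h1]; simp
    simpa [dotProduct] using this
  have := hQp _ hy0 hys
  rwa [hPx, dotProduct_comm] at this

lemma trace_K {d : ℕ} (hd : 0 < d) {Q S T : Matrix (Fin d) (Fin d) ℝ} (hQ : memQ Q)
    (hS : isSigmaOf Q S) (hT : T.IsSymm) (hT1 : T.mulVec (fun _ => 1) = 0) :
    (thetaOf Q + ((d:ℝ)^2)⁻¹ • Jm d) * (S + Jm d) = 1 ∧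
    ((thetaOf Q + ((d:ℝ)^2)⁻¹ • Jm d) * (T + Jm d)).trace = sinner (gammaOf T) Q + 1 ∧
    sinner (gammaOf S) Q = d - 1 := by
  have hd' : (d:ℝ) ≠ 0 := by exact_mod_cast hd.ne'
  obtain ⟨hQs, hQz, -⟩ := hQ
  have hJ0 : thetaOf Q * Jm d = 0 := by
    ext i j
    simp [Jm, Matrix.mul_apply, theta_rowsum hQz]
  have hJT : ∀ T : Matrix (Fin d) (Fin d) ℝ, T.IsSymm → T.mulVec (fun _ => 1) = 0 →
      Jm d * T = 0 := by
    intro T hT hT1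
    ext i j
    have := rowsum_of hT1 j
    simp only [Jm, Matrix.mul_apply, Matrix.of_apply, one_mul, Matrix.zero_apply]
    rw [← this]
    exact Finset.sum_congr rfl fun l _ => hT.apply j l
  have hJJ : Jm d * Jm d = (d:ℝ) • Jm d := by
    ext i j; simp [Jm, Matrix.mul_apply]
  have hexp : ∀ T : Matrix (Fin d) (Fin d) ℝ, T.IsSymm → T.mulVec (fun _ => 1) = 0 →
      (thetaOf Q + ((d:ℝ)^2)⁻¹ • Jm d) * (T + Jm d) = thetaOf Q * T + (d:ℝ)⁻¹ • Jm d := by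
    intro T hT hT1
    rw [add_mul, mul_add, mul_add, hJ0, smul_mul_assoc, smul_mul_assoc, hJT T hT hT1, hJJ,
      smul_smul]
    have : ((d:ℝ)^2)⁻¹ * d = (d:ℝ)⁻¹ := by field_simp
    rw [this]; simp
  have htrJ : (Jm d).trace = d := by simp [Jm, Matrix.trace]
  refine ⟨?_, ?_, ?_⟩
  · rw [hexp S hS.1 hS.2.1, hS.2.2]
    simp [Pmat, Jm]
  · rw [hexp T hT hT1, Matrix.trace_add, Matrix.trace_smul, htrJ, trace_theta hQs hQz hT]
    simp [hd']
  · rw [← trace_theta hQs hQz hS.1, hS.2.2]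
    have : Pmat d = 1 - (d:ℝ)⁻¹ • Jm d := rfl
    rw [this, Matrix.trace_sub, Matrix.trace_smul, htrJ]
    simp [hd']

end Helpers

/-- KKT sufficiency for step (S2): if `Q(η̌) ∈ 𝒬`, `Γ̌ = Γ(Q(η̌))` is primal feasible,
`η̌ ≥ 0`, and complementary slackness holds, then `Γ̌` is the unique minimizer of
`Γ ↦ ⟨Γ, Q̂⟩ − log det(CM(Γ))` over the feasible set
`{Γ ∈ 𝒞^d : Γ_{ij} ≤ Γ_{ik} + Γ_{jk} for all (i,j,k) ∈ Ψ}`. -/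
theorem kkt_sufficiency {d : ℕ}
    (Qh : Matrix (Fin d) (Fin d) ℝ)
    (hQhsym : Qh.IsSymm) (hQhdiag : ∀ i, Qh i i = 0)
    (Ψ : Finset (Fin d × Fin d × Fin d))
    (hΨ : ∀ t ∈ Ψ, t.1 ≠ t.2.1 ∧ t.1 ≠ t.2.2 ∧ t.2.1 ≠ t.2.2)
    (η : Fin d × Fin d × Fin d → ℝ)
    (hQη : memQ (Qeta Qh Ψ η))
    (S : Matrix (Fin d) (Fin d) ℝ) (hS : isSigmaOf (Qeta Qh Ψ η) S)
    (hprimal : ∀ t ∈ Ψ,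
      gammaOf S t.1 t.2.1 ≤ gammaOf S t.1 t.2.2 + gammaOf S t.2.1 t.2.2)
    (hdual : ∀ t ∈ Ψ, 0 ≤ η t)
    (hslack : ∑ t ∈ Ψ, η t *
      (gammaOf S t.1 t.2.1 - gammaOf S t.1 t.2.2 - gammaOf S t.2.1 t.2.2) = 0) :
    (memC (gammaOf S) ∧ ∀ t ∈ Ψ,
      gammaOf S t.1 t.2.1 ≤ gammaOf S t.1 t.2.2 + gammaOf S t.2.1 t.2.2) ∧
    (∀ Γ : Matrix (Fin d) (Fin d) ℝ,
      (memC Γ ∧ ∀ t ∈ Ψ, Γ t.1 t.2.1 ≤ Γ t.1 t.2.2 + Γ t.2.1 t.2.2) →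
      (sinner (gammaOf S) Qh - Real.log ((CM (gammaOf S)).det) ≤
          sinner Γ Qh - Real.log ((CM Γ).det) ∧
        (sinner Γ Qh - Real.log ((CM Γ).det) =
            sinner (gammaOf S) Qh - Real.log ((CM (gammaOf S)).det) →
          Γ = gammaOf S))) := by
  have hCS : memC (gammaOf S) := by
    refine ⟨gamma_symm hS.1, gamma_diag S, fun x hx hsum => ?_⟩
    rw [quad_gamma S x hsum]
    have := sigma_pos hQη hS x hx hsum
    linarith
  refine ⟨⟨hCS, hprimal⟩, fun Γ hΓ => ?_⟩
  obtain ⟨hC, hfeas⟩ := hΓ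
  rcases Nat.eq_zero_or_pos d with hd | hd
  · subst hd
    have : Γ = gammaOf S := Subsingleton.elim _ _
    subst this
    exact ⟨le_rfl, fun _ => rfl⟩
  obtain ⟨T, hTs, hT1, rfl⟩ := exists_S hd hC
  have hA := posDef_add_J hd hS.1 hS.2.1 (sigma_pos hQη hS)
  have hB := posDef_add_J hd hTs hT1 (fun x hx hsum => by
    have := hC.2.2 x hx hsum
    rw [quad_gamma T x hsum] at this
    linarith)
  obtain ⟨hK, htr, hSd⟩ := trace_K hd hQη hS hTs hT1
  obtain ⟨hle, heq⟩ := logdet_ineq hA hB hK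
  rw [htr, Fintype.card_fin] at hle heq
  rw [det_CM hd hS.2.1 hA, det_CM hd hT1 hB]
  have hsS := sinner_Qeta Qh Ψ hΨ η (gamma_symm hS.1) (gamma_diag S)
  have hsT := sinner_Qeta Qh Ψ hΨ η (gamma_symm hTs) (gamma_diag T)
  rw [hslack] at hsS
  have hneg : ∑ t ∈ Ψ, η t *
      (gammaOf T t.1 t.2.1 - gammaOf T t.1 t.2.2 - gammaOf T t.2.1 t.2.2) ≤ 0 :=
    Finset.sum_nonpos fun t ht =>
      mul_nonpos_of_nonneg_of_nonpos (hdual t ht) (by linarith [hfeas t ht])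
  refine ⟨by linarith, fun h => ?_⟩
  have h2 : T + Jm d = S + Jm d := heq (by linarith)
  rw [add_right_cancel h2]
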